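/- arXiv:1210.8303 — 11 statements merged into one kernel-verified Lean document; each statement's English description precedes it below -/
import Mathlib

section
/- The dominator tree D of a flow graph G has both the parent property and the sibling property; that is, for every arc (v, w) of G the immediate dominator d(w) of w is an ancestor of v in D, and no vertex dominates a distinct vertex having the same parent in D. -/
variable {V : Type*}

/-- `IsWalk A u v p`: `p` is a path from `u` to `v` in the digraph with arc
relation `A`, listing all of its vertices in order. -/
def IsWalk (A : V → V → Prop) (u v : V) (p : List V) : Prop :=
  p.Chain' A ∧ p.head? = some u ∧ p.getLast? = some v

/-- A flow graph: a directed graph with arc relation `A` and start vertex `s`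
such that every vertex is reachable from `s` and no arc enters `s`. -/
structure FlowGraph (V : Type*) where
  A : V → V → Prop
  s : V
  reach : ∀ v : V, ∃ p : List V, IsWalk A s v p
  no_enter : ∀ v : V, ¬ A v s

/-- `DomOn A s v w`: `v` lies on every path from `s` to `w` in the digraph with
arc relation `A`. -/
def DomOn (A : V → V → Prop) (s v w : V) : Prop :=
  ∀ p : List V, IsWalk A s w p → v ∈ p

/-- `v` dominates `w` in the flow graph `G`. -/
def FlowGraph.Dom (G : FlowGraph V) (v w : V) : Prop :=
  DomOn G.A G.s v w

/-- A rooted tree on vertex set `V`, given by a parent function: the root is a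
fixed point of the parent function, and iterating the parent function from any
vertex eventually reaches the root. -/
structure ParentTree (V : Type*) where
  parent : V → V
  root : V
  parent_root : parent root = root
  reaches_root : ∀ v : V, ∃ n : ℕ, parent^[n] v = root

/-- `T.Anc x y`: `x` is an ancestor of `y` in the rooted tree `T` (every vertex
is an ancestor of itself). -/
def ParentTree.Anc (T : ParentTree V) (x y : V) : Prop :=
  ∃ n : ℕ, T.parent^[n] y = x

/-- `T` has the parent property with respect to `G`: for every arc `(v, w)`,
the parent of `w` is an ancestor of `v` in `T`. -/
def ParentProperty (G : FlowGraph V) (T : ParentTree V) : Prop :=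
  ∀ v w : V, G.A v w → T.Anc (T.parent w) v

/-- The sibling property with respect to an arbitrary arc relation `A` with
start vertex `s`: no non-root vertex dominates a distinct vertex with the same
parent. -/
def SiblingPropertyOn (A : V → V → Prop) (s : V) (T : ParentTree V) : Prop :=
  ∀ v w : V, v ≠ T.root → w ≠ T.root → v ≠ w → T.parent v = T.parent w →
    ¬ DomOn A s v w

/-- `T` has the sibling property with respect to the flow graph `G`. -/
def SiblingProperty (G : FlowGraph V) (T : ParentTree V) : Prop :=
  SiblingPropertyOn G.A G.s T

/-- `T` is the dominator tree of the digraph with arc relation `A` and start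
vertex `s`: `T` is rooted at `s`, and the parent of every vertex `v ≠ s` is its
immediate dominator, i.e. a strict dominator of `v` that is dominated by every
strict dominator of `v`. -/
def IsDomTreeOn (A : V → V → Prop) (s : V) (T : ParentTree V) : Prop :=
  T.root = s ∧ ∀ v : V, v ≠ s →
    DomOn A s (T.parent v) v ∧ T.parent v ≠ v ∧
    ∀ u : V, DomOn A s u v → u ≠ v → DomOn A s u (T.parent v)

/-- `T` is the dominator tree of the flow graph `G`. -/
def IsDomTree (G : FlowGraph V) (T : ParentTree V) : Prop :=
  IsDomTreeOn G.A G.s T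

/-- `ord` is (the numbering of) a preorder of the rooted tree `T`: an injective
numbering of the vertices such that for every vertex `v` the descendants of `v`
are ordered consecutively, with `v` first. -/
def IsTreePreorder (T : ParentTree V) (ord : V → ℕ) : Prop :=
  Function.Injective ord ∧
  (∀ v x : V, T.Anc v x → ord v ≤ ord x) ∧
  (∀ v x y z : V, T.Anc v x → T.Anc v z → ord x ≤ ord y → ord y ≤ ord z →
    T.Anc v y)

/-- A preorder `ord` of `T` is low-high on the digraph with arc relation `A`
and start vertex `s`: for every `v ≠ s`, either `(t(v), v)` is an arc, or there
are arcs `(u, v)` and `(w, v)` with `u < v < w` in the order and `w` not a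
descendant of `v` in `T`. -/
def LowHighOn (A : V → V → Prop) (s : V) (T : ParentTree V) (ord : V → ℕ) :
    Prop :=
  IsTreePreorder T ord ∧
  ∀ v : V, v ≠ s → (A (T.parent v) v ∨
    ∃ u w : V, A u v ∧ A w v ∧ ord u < ord v ∧ ord v < ord w ∧ ¬ T.Anc v w)

/-- A low-high order of `T` on the flow graph `G`. -/
def LowHigh (G : FlowGraph V) (T : ParentTree V) (ord : V → ℕ) : Prop :=
  LowHighOn G.A G.s T ord

/-- `B` is (the arc relation of) a spanning tree of `G` rooted at `s`: a
subgraph of `G` in which no arc enters `s`, every vertex other than `s` has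
exactly one entering arc, and every vertex is reachable from `s`. -/
def IsSpanningTree (G : FlowGraph V) (B : V → V → Prop) : Prop :=
  (∀ u v : V, B u v → G.A u v) ∧
  (∀ v : V, ¬ B v G.s) ∧
  (∀ v : V, v ≠ G.s → ∃! u : V, B u v) ∧
  (∀ v : V, ∃ p : List V, IsWalk B G.s v p)

/-- Spanning trees `B` and `R` of `G` rooted at `s` are independent: for every
vertex `v`, the paths from `s` to `v` in `B` and in `R` have in common only
dominators of `v`. -/
def Independent (G : FlowGraph V) (B R : V → V → Prop) : Prop :=
  ∀ v : V, ∀ p q : List V, IsWalk B G.s v p → IsWalk R G.s v q →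
    ∀ x : V, x ∈ p → x ∈ q → G.Dom x v

/-- Spanning trees `B` and `R` of `G` rooted at `s` are strongly independent:
for every pair of vertices `v`, `w`, either the path from `s` to `v` in `B` and
the path from `s` to `w` in `R` have in common only common dominators of `v`
and `w`, or the same holds with the roles of `B` and `R` exchanged. -/
def StronglyIndependent (G : FlowGraph V) (B R : V → V → Prop) : Prop :=
  ∀ v w : V,
    (∀ p q : List V, IsWalk B G.s v p → IsWalk R G.s w q →
      ∀ x : V, x ∈ p → x ∈ q → G.Dom x v ∧ G.Dom x w) ∨
    (∀ p q : List V, IsWalk R G.s v p → IsWalk B G.s w q →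
      ∀ x : V, x ∈ p → x ∈ q → G.Dom x v ∧ G.Dom x w)

/-- `IsDerivedArcOf G T v b a`: `(a, b)` is the derived arc of the arc `(v, b)`
of `G` with respect to `T`: `b` is not an ancestor of `v` in `T`, and `a = v`
if `v` is the parent of `b`, while otherwise `a` is the sibling of `b` in `T`
that is an ancestor of `v`. -/
def IsDerivedArcOf (G : FlowGraph V) (T : ParentTree V) (v b a : V) : Prop :=
  G.A v b ∧ ¬ T.Anc b v ∧
    ((v = T.parent b ∧ a = v) ∨
     (v ≠ T.parent b ∧ a ≠ T.root ∧ T.parent a = T.parent b ∧ T.Anc a v))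

/-- The arc relation of the derived graph of `G` with respect to `T`. -/
def DerivedArc (G : FlowGraph V) (T : ParentTree V) (a b : V) : Prop :=
  ∃ v : V, IsDerivedArcOf G T v b a

/-- `S` is the vertex set of a strongly connected subgraph of the digraph with
arc relation `A`. -/
def StronglyConnectedSet (A : V → V → Prop) (S : Set V) : Prop :=
  S.Nonempty ∧ ∀ u ∈ S, ∀ v ∈ S, ∃ p : List V,
    IsWalk A u v p ∧ ∀ x ∈ p, x ∈ S

/-- `G` is reducible: every strongly connected subgraph has a single entry
vertex, i.e. a vertex of the subgraph contained in every path from `s` to a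
vertex of the subgraph. -/
def Reducible (G : FlowGraph V) : Prop :=
  ∀ S : Set V, StronglyConnectedSet G.A S →
    ∃ v ∈ S, ∀ u ∈ S, ∀ p : List V, IsWalk G.A G.s u p → v ∈ p

/-- A digraph is acyclic if it has no cycle (a path from a vertex to itself
with at least one arc). -/
def Acyclic (A : V → V → Prop) : Prop :=
  ¬ ∃ (v : V) (p : List V), IsWalk A v v p ∧ 2 ≤ p.length

/-- `IsHighWalk A ν u v p`: `p` is a high path from `u` to `v`: a path all of
whose vertices other than `u` and `v` are greater (in the numbering `ν`) than
both `u` and `v`. -/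
def IsHighWalk (A : V → V → Prop) (ν : V → ℕ) (u v : V) (p : List V) : Prop :=
  IsWalk A u v p ∧ ∀ x ∈ p, x ≠ u → x ≠ v → ν u < ν x ∧ ν v < ν x

/-- In the dominator tree, every dominator is an ancestor. -/
theorem anc_of_dom (G : FlowGraph V) (D : ParentTree V) (hD : IsDomTree G D) (u : V) :
    ∀ (n : ℕ) (v : V), D.parent^[n] v = D.root → DomOn G.A G.s u v → D.Anc u v := by
  obtain ⟨hr, hD⟩ := hD
  have base : DomOn G.A G.s u G.s → D.Anc u G.s := by
    intro h
    have := h [G.s] ⟨List.isChain_singleton _, by simp, by simp⟩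
    simp only [List.mem_singleton] at this
    exact ⟨0, by simp [this]⟩
  intro n
  induction n with
  | zero =>
    intro v hv h
    have hv' : v = G.s := by simpa [hr] using hv
    subst hv'
    exact base h
  | succ k ih =>
    intro v hv h
    by_cases hvs : v = G.s
    · subst hvs
      exact base h
    by_cases huv : u = v
    · exact ⟨0, by simp [huv]⟩
    obtain ⟨m, hm⟩ := ih (D.parent v) (by simpa using hv) ((hD v hvs).2.2 u h huv)
    exact ⟨m + 1, by simpa using hm⟩

/-- The dominator tree of a flow graph has both the parent property and the
sibling property. -/
theorem stmt0 [Fintype V] (G : FlowGraph V) (D : ParentTree V)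
    (hD : IsDomTree G D) :
    ParentProperty G D ∧ SiblingProperty G D := by
  have key : ∀ u v, DomOn G.A G.s u v → D.Anc u v := by
    intro u v h
    obtain ⟨n, hn⟩ := D.reaches_root v
    exact anc_of_dom G D hD u n v hn h
  obtain ⟨hr, hD⟩ := hD
  constructor
  · intro v w hvw
    have hws : w ≠ G.s := by
      rintro rfl
      exact G.no_enter v hvw
    obtain ⟨h1, h2, -⟩ := hD w hws
    apply key
    intro p hp
    obtain ⟨hc, hh, hl⟩ := hp
    have hmem : D.parent w ∈ p ++ [w] := by
      apply h1
      refine ⟨?_, ?_, by simp⟩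
      · refine List.IsChain.append hc (List.isChain_singleton _) ?_
        intro x hx y hy
        simp_all
      · simp [hh]
    simpa [h2] using hmem
  · intro v w hv hw hne hp hdom
    have hd := (hD w (hr ▸ hw)).2.2 v hdom hne
    rw [← hp] at hd
    obtain ⟨n, hn⟩ := key _ _ hd
    have hper : D.parent^[n+1] v = v := by simpa using hn
    obtain ⟨m, hm⟩ := D.reaches_root v
    have h1 : (D.parent^[n+1])^[m] v = v := Function.iterate_fixed hper m
    rw [← Function.iterate_mul, show (n+1)*m = n*m + m by ring,
      Function.iterate_add_apply, hm, Function.iterate_fixed D.parent_root] at h1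
    exact hv h1.symm
end

section
/- Let T be a rooted tree on the vertex set of a flow graph G that has the parent property. Let v ≠ s be a vertex and let u be a vertex that is not a descendant of t(v) in T. Then every path in G from u to v contains t(v). -/
variable {V : Type*}

/-- A path from a non-descendant of `x` to a descendant of `x` contains `x`. -/
lemma mem_of_enter (G : FlowGraph V) (T : ParentTree V) (hpp : ParentProperty G T)
    (x v : V) (hx : T.Anc x v) (p : List V) :
    ∀ u : V, ¬ T.Anc x u → IsWalk G.A u v p → x ∈ p := by
  induction p with
  | nil => intro u _ hp; simp [IsWalk] at hp
  | cons a l ih =>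
    rintro u hu ⟨hc, hh, hl⟩
    simp only [List.head?_cons, Option.some.injEq] at hh
    subst hh
    cases l with
    | nil =>
      simp only [List.getLast?_singleton, Option.some.injEq] at hl
      subst hl
      exact absurd hx hu
    | cons w r =>
      have hc' := List.isChain_cons_cons.mp hc
      by_cases hw : T.Anc x w
      · obtain ⟨n, hn⟩ := hw
        cases n with
        | zero =>
          simp only [Function.iterate_zero, id_eq] at hn
          simp [hn]
        | succ n =>
          exfalso
          apply hu
          obtain ⟨m, hm⟩ := hpp _ _ hc'.1
          refine ⟨n + m, ?_⟩
          rw [Function.iterate_add_apply, hm]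
          exact hn
      · refine List.mem_cons_of_mem _ (ih w hw ⟨hc'.2, rfl, ?_⟩)
        rw [← hl, List.getLast?_cons_cons]

/-- If `T` has the parent property, `v ≠ s`, and `u` is not a descendant of
`t(v)` in `T`, then every path in `G` from `u` to `v` contains `t(v)`. -/
theorem stmt1 [Fintype V] (G : FlowGraph V) (T : ParentTree V)
    (hroot : T.root = G.s) (hpp : ParentProperty G T)
    (v : V) (hv : v ≠ G.s) (u : V) (hu : ¬ T.Anc (T.parent v) u)
    (p : List V) (hp : IsWalk G.A u v p) :
    T.parent v ∈ p := by
  exact mem_of_enter G T hpp (T.parent v) v ⟨1, rfl⟩ p u hu hp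
end

section
/- Let T be a rooted tree on the vertex set of a flow graph G that has the parent property. If v is an ancestor of w in T, then v dominates w in G. -/
variable {V : Type*}

theorem anc_or_mem (G : FlowGraph V) (T : ParentTree V) (hpp : ParentProperty G T)
    (v w : V) (h : T.Anc v w) : ∀ (p : List V) (u : V), IsWalk G.A u w p →
      T.Anc v u ∨ v ∈ p := by
  intro p
  induction p with
  | nil => intro u hp; simp [IsWalk] at hp
  | cons a l ih =>
    rintro u ⟨hc, hh, hl⟩
    have hau : a = u := by simpa using hh
    subst hau
    cases l with
    | nil =>
      have : a = w := by simpa using hl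
      subst this
      exact Or.inl h
    | cons b l =>
      have hc' : G.A a b ∧ (b :: l).IsChain G.A := List.isChain_cons_cons.mp hc
      rcases ih b ⟨hc'.2, rfl, by simpa using hl⟩ with ⟨n, hn⟩ | hm
      · cases n with
        | zero =>
          have : b = v := hn
          right; simp [this]
        | succ n =>
          obtain ⟨m, hm⟩ := hpp a b hc'.1
          left
          refine ⟨n + m, ?_⟩
          rw [Function.iterate_add_apply, hm]
          exact hn
      · exact Or.inr (List.mem_cons_of_mem _ hm)

/-- If `T` has the parent property and `v` is an ancestor of `w` in `T`, then
`v` dominates `w` in `G`. -/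
theorem stmt2 [Fintype V] (G : FlowGraph V) (T : ParentTree V)
    (hroot : T.root = G.s) (hpp : ParentProperty G T)
    (v w : V) (h : T.Anc v w) :
    G.Dom v w := by
  intro p hp
  rcases anc_or_mem G T hpp v w h p G.s hp with ⟨n, hn⟩ | hm
  · have hs : T.parent G.s = G.s := hroot ▸ T.parent_root
    rw [Function.iterate_fixed hs] at hn
    rw [← hn]
    exact List.mem_of_mem_head? hp.2.1
  · exact hm
end

section
/- Let T be a rooted tree on the vertex set of a flow graph G that has the parent property, and let v ≠ s. If x is a vertex on a simple path P in G from t(v) to v, then x is a descendant of t(v) in T and x is not a proper descendant of v in T. -/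
variable {V : Type*}

theorem enter_aux (G : FlowGraph V) (T : ParentTree V) (hpp : ParentProperty G T) (w : V) :
    ∀ (l : List V) (a b : V), IsWalk G.A a b l → ¬ T.Anc w a → T.Anc w b → w ∈ l := by
  intro l
  induction l with
  | nil => intro a b h; simp [IsWalk] at h
  | cons c l ih =>
    intro a b h ha hb
    obtain ⟨hc, hh, hl⟩ := h
    have hca : c = a := by simpa using hh
    subst hca
    cases l with
    | nil =>
      have : c = b := by simpa using hl
      subst this
      exact absurd hb ha
    | cons d l =>
      have hc2 : G.A c d ∧ (d :: l).Chain' G.A := List.isChain_cons_cons.1 hc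
      by_cases hd : T.Anc w d
      · obtain ⟨n, hn⟩ := hd
        cases n with
        | zero =>
          have : d = w := hn
          simp [this]
        | succ n =>
          exfalso
          apply ha
          obtain ⟨m, hm⟩ := hpp _ _ hc2.1
          refine ⟨n + m, ?_⟩
          rw [Function.iterate_add_apply, hm]
          exact hn
      · refine List.mem_cons_of_mem _ (ih d b ⟨hc2.2, rfl, ?_⟩ hd hb)
        simpa using hl

theorem parent_not_desc (T : ParentTree V) (v : V) (hv : v ≠ T.root) :
    ¬ T.Anc v (T.parent v) := by
  rintro ⟨n, hn⟩
  obtain ⟨m, hm⟩ := T.reaches_root v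
  have h1 : T.parent^[n + 1] v = v := hn
  have h2 : (T.parent^[n + 1])^[m] v = v := Function.iterate_fixed h1 m
  rw [← Function.iterate_mul, show (n + 1) * m = n * m + m by ring,
    Function.iterate_add_apply, hm, Function.iterate_fixed T.parent_root] at h2
  exact hv h2.symm

/-- If `T` has the parent property, `v ≠ s`, and `x` lies on a simple path in
`G` from `t(v)` to `v`, then `x` is a descendant of `t(v)` in `T` but not a
proper descendant of `v`. -/
theorem stmt3 [Fintype V] (G : FlowGraph V) (T : ParentTree V)
    (hroot : T.root = G.s) (hpp : ParentProperty G T)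
    (v : V) (hv : v ≠ G.s) (p : List V)
    (hp : IsWalk G.A (T.parent v) v p) (hsimple : p.Nodup)
    (x : V) (hx : x ∈ p) :
    T.Anc (T.parent v) x ∧ ¬ (T.Anc v x ∧ x ≠ v) := by
  obtain ⟨l1, l2, rfl⟩ := List.append_of_mem hx
  obtain ⟨hc, hh, hl⟩ := hp
  have hc' : (l1 ++ x :: l2).IsChain G.A := hc
  rw [List.nodup_append] at hsimple
  obtain ⟨-, -, hdis⟩ := hsimple
  have hl' : (x :: l2).getLast? = some v := by
    rw [List.getLast?_append] at hl
    simpa [List.getLast?_cons] using hl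
  constructor
  · by_contra hx'
    have hmem := enter_aux G T hpp (T.parent v) (x :: l2) x v
      ⟨hc'.right_of_append, rfl, hl'⟩ hx' ⟨1, rfl⟩
    cases l1 with
    | nil =>
      have : x = T.parent v := by simpa using hh
      exact hx' ⟨0, this⟩
    | cons c l =>
      have : c = T.parent v := by simpa using hh
      exact hdis c (by simp) _ hmem this
  · rintro ⟨hvx, hne⟩
    have hc2 : (l1 ++ [x]).IsChain G.A := by
      have : ((l1 ++ [x]) ++ l2).IsChain G.A := by simpa using hc'
      exact this.left_of_append
    have hmem := enter_aux G T hpp v (l1 ++ [x]) (T.parent v) x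
      ⟨hc2, by cases l1 <;> simpa using hh, by simp⟩
      (parent_not_desc T v (hroot ▸ hv)) hvx
    have hv1 : v ∈ l1 := by
      rcases List.mem_append.1 hmem with h | h
      · exact h
      · exact absurd (List.mem_singleton.1 h).symm hne
    exact hdis v hv1 v (List.mem_of_getLast? hl') rfl
end

section
/- A rooted tree T on the vertex set of a flow graph G has both the parent property and the sibling property if and only if T is the dominator tree D of G. -/
variable {V : Type*}

inductive Wk (A : V → V → Prop) (s : V) : V → List V → Prop
  | base : Wk A s s [s]
  | step {v w : V} {p : List V} : Wk A s v p → A v w → Wk A s w (p ++ [w])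

theorem wk_of_isWalk (A : V → V → Prop) (s : V) (p : List V) :
    ∀ w, IsWalk A s w p → Wk A s w p := by
  induction p using List.reverseRecOn with
  | nil => intro w h; simp [IsWalk] at h
  | append_singleton p a ih =>
    rintro w ⟨h1, h2, h3⟩
    simp at h3
    subst h3
    rcases p.eq_nil_or_concat with rfl | ⟨q, b, rfl⟩
    · simp at h2
      subst h2
      exact Wk.base
    · have h1' := List.isChain_append.1 h1
      refine Wk.step (v := b) (ih b ⟨h1'.1, ?_, by simp⟩) ?_
      · rw [← h2]; simp
      · exact h1'.2.2 b (by simp) a (by simp)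

theorem isWalk_of_wk {A : V → V → Prop} {s w : V} {p : List V} (h : Wk A s w p) :
    IsWalk A s w p := by
  induction h with
  | base => exact ⟨List.isChain_singleton _, rfl, rfl⟩
  | @step v w p hp ha ih =>
    obtain ⟨h1, h2, h3⟩ := ih
    refine ⟨List.isChain_append.2 ⟨h1, List.isChain_singleton _, ?_⟩, ?_, by simp⟩
    · intro x hx y hy
      rw [h3] at hx
      simp at hx hy
      subst hx; subst hy; exact ha
    · simp [h2]

theorem domOn_iff {A : V → V → Prop} {s x w : V} :
    DomOn A s x w ↔ ∀ p, Wk A s w p → x ∈ p :=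
  ⟨fun h p hp => h p (isWalk_of_wk hp), fun h p hp => h p (wk_of_isWalk _ _ _ _ hp)⟩

theorem wk_prefix {A : V → V → Prop} {s w : V} {p : List V} (h : Wk A s w p) (x : V)
    (hx : x ∈ p) : ∃ q, Wk A s x q ∧ q ⊆ p := by
  induction h with
  | base => simp at hx; subst hx; exact ⟨_, Wk.base, fun _ h => h⟩
  | @step v w p hp ha ih =>
    rcases List.mem_append.1 hx with h | h
    · obtain ⟨q, hq, hs⟩ := ih h
      exact ⟨q, hq, fun y hy => List.mem_append_left _ (hs hy)⟩
    · simp at h; subst h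
      exact ⟨_, Wk.step hp ha, fun _ h => h⟩

theorem domOn_trans {A : V → V → Prop} {s x y z : V} (h1 : DomOn A s x y)
    (h2 : DomOn A s y z) : DomOn A s x z := by
  rw [domOn_iff] at *
  intro p hp
  obtain ⟨q, hq, hs⟩ := wk_prefix hp y (h2 p hp)
  exact hs (h1 q hq)

theorem domOn_start {A : V → V → Prop} {s x : V} (h : DomOn A s x s) : x = s := by
  simpa using domOn_iff.1 h _ Wk.base

theorem domOn_pred {A : V → V → Prop} {s x v w : V} (h : DomOn A s x w) (hn : x ≠ w)
    (ha : A v w) : DomOn A s x v := by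
  rw [domOn_iff] at *
  intro p hp
  simpa [hn] using h _ (hp.step ha)

theorem domOn_antisymm (G : FlowGraph V) {u v : V} (h1 : DomOn G.A G.s u v)
    (h2 : DomOn G.A G.s v u) : u = v := by
  by_contra hne
  have key : ∀ w p, Wk G.A G.s w p → u ∉ p ∧ v ∉ p := by
    intro w p h
    induction h with
    | base =>
      simp only [List.mem_singleton]
      constructor
      · rintro rfl; exact hne (domOn_start h2).symm
      · rintro rfl; exact hne (domOn_start h1)
    | @step a w p hp ha ih =>
      have hne' : v ≠ u := Ne.symm hne
      constructor
      · intro h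
        rcases List.mem_append.1 h with h | h
        · exact ih.1 h
        · simp at h; subst h
          have := domOn_iff.1 h2 _ (hp.step ha)
          simp [hne', ih.2] at this
      · intro h
        rcases List.mem_append.1 h with h | h
        · exact ih.2 h
        · simp at h; subst h
          have := domOn_iff.1 h1 _ (hp.step ha)
          simp [hne, ih.1] at this
  obtain ⟨p, hp⟩ := G.reach v
  exact (key _ _ (wk_of_isWalk _ _ _ _ hp)).1 (h1 p hp)

theorem domOn_linear (G : FlowGraph V) {a b v : V} (hab : a ≠ b) (h1 : DomOn G.A G.s a v)
    (h2 : DomOn G.A G.s b v) : DomOn G.A G.s a b ∨ DomOn G.A G.s b a := by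
  by_contra hcon
  push Not at hcon
  obtain ⟨ha, hb⟩ := hcon
  rw [domOn_iff] at ha hb
  push Not at ha hb
  obtain ⟨q, hq, hqa⟩ := ha
  obtain ⟨r, hr, hrb⟩ := hb
  have key : ∀ w p, Wk G.A G.s w p →
      (∃ p', Wk G.A G.s w p' ∧ a ∉ p') ∨ (∃ p', Wk G.A G.s w p' ∧ b ∉ p') := by
    intro w p h
    induction h with
    | base =>
      by_cases h : a = G.s
      · exact Or.inr ⟨_, Wk.base, by simpa [← h] using hab.symm⟩
      · exact Or.inl ⟨_, Wk.base, by simpa using h⟩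
    | @step x w p hp hx ih =>
      by_cases hwa : a = w
      · subst hwa; exact Or.inr ⟨r, hr, hrb⟩
      by_cases hwb : b = w
      · subst hwb; exact Or.inl ⟨q, hq, hqa⟩
      rcases ih with ⟨p', h, h'⟩ | ⟨p', h, h'⟩
      · exact Or.inl ⟨_, h.step hx, by simp [h', hwa]⟩
      · exact Or.inr ⟨_, h.step hx, by simp [h', hwb]⟩
  obtain ⟨p, hp⟩ := G.reach v
  rcases key _ _ (wk_of_isWalk _ _ _ _ hp) with ⟨p', h, h'⟩ | ⟨p', h, h'⟩
  · exact h' (domOn_iff.1 h1 _ h)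
  · exact h' (domOn_iff.1 h2 _ h)

theorem anc_root (T : ParentTree V) {x : V} (h : T.Anc x T.root) : x = T.root := by
  obtain ⟨n, hn⟩ := h
  rw [← hn, Function.iterate_fixed T.parent_root]

theorem anc_parent (T : ParentTree V) {x w : V} (h : T.Anc x w) (hne : x ≠ w) :
    T.Anc x (T.parent w) := by
  obtain ⟨n, hn⟩ := h
  cases n with
  | zero => exact absurd hn.symm hne
  | succ n => exact ⟨n, hn⟩

theorem anc_of_parent (T : ParentTree V) {x w : V} (h : T.Anc x (T.parent w)) : T.Anc x w := by
  obtain ⟨n, hn⟩ := h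
  exact ⟨n + 1, hn⟩

theorem anc_trans (T : ParentTree V) {x y z : V} (h : T.Anc x y) (h' : T.Anc y z) :
    T.Anc x z := by
  obtain ⟨n, rfl⟩ := h
  obtain ⟨m, rfl⟩ := h'
  exact ⟨n + m, Function.iterate_add_apply _ _ _ _⟩

theorem parent_ne (T : ParentTree V) {v : V} (h : v ≠ T.root) : T.parent v ≠ v := by
  intro hv
  obtain ⟨n, hn⟩ := T.reaches_root v
  rw [Function.iterate_fixed hv] at hn
  exact h hn

theorem tree_induct (T : ParentTree V) (P : V → Prop) (h0 : P T.root)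
    (h1 : ∀ v, v ≠ T.root → P (T.parent v) → P v) (v : V) : P v := by
  obtain ⟨n, hn⟩ := T.reaches_root v
  induction n generalizing v with
  | zero => have : v = T.root := hn
            rw [this]; exact h0
  | succ n ih =>
    by_cases hv : v = T.root
    · rw [hv]; exact h0
    · exact h1 v hv (ih _ hn)

theorem dom_of_anc (G : FlowGraph V) (T : ParentTree V) (hroot : T.root = G.s)
    (hP : ParentProperty G T) {x w : V} (h : T.Anc x w) : DomOn G.A G.s x w := by
  rw [domOn_iff]
  intro p hp
  induction hp with
  | base => rw [← hroot] at h ⊢; simpa using anc_root T h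
  | @step v w p hp ha ih =>
    by_cases hx : x = w
    · simp [hx]
    · exact List.mem_append_left _ (ih (anc_trans T (anc_parent T h hx) (hP v w ha)))

theorem anc_of_dom_s4 (G : FlowGraph V) (T : ParentTree V) (hroot : T.root = G.s)
    (hP : ParentProperty G T) (hS : SiblingProperty G T) (v : V) :
    ∀ u, DomOn G.A G.s u v → T.Anc u v := by
  intro u
  refine tree_induct T (fun u => DomOn G.A G.s u v → T.Anc u v) ?_ ?_ u
  · intro _; exact T.reaches_root v
  · intro u hu ih hd
    have hpu : DomOn G.A G.s (T.parent u) u := dom_of_anc G T hroot hP ⟨1, rfl⟩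
    have hanc := ih (domOn_trans hpu hd)
    classical
    have hn := Nat.find_spec hanc
    have hmin := fun m => Nat.find_min hanc (m := m)
    generalize Nat.find hanc = n at hn hmin
    cases n with
    | zero =>
      have hv : v = T.parent u := hn
      rw [← hv] at hpu
      exact ⟨0, domOn_antisymm G hpu hd⟩
    | succ n =>
      rw [Function.iterate_succ_apply'] at hn
      have hm := hmin n (Nat.lt_succ_self n)
      by_cases heq : T.parent^[n] v = u
      · exact ⟨n, heq⟩
      exfalso
      have hr : T.parent^[n] v ≠ T.root := by
        intro h
        rw [← hn, h, T.parent_root] at hm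
        exact hm rfl
      have hd' : DomOn G.A G.s (T.parent^[n] v) v := dom_of_anc G T hroot hP ⟨n, rfl⟩
      rcases domOn_linear G heq hd' hd with h | h
      · exact hS _ _ hr hu heq hn h
      · exact hS _ _ hu hr (Ne.symm heq) hn.symm h

/-- A rooted tree on the vertex set of a flow graph `G` has both the parent
property and the sibling property if and only if it is the dominator tree of
`G`. -/
theorem stmt4 [Fintype V] (G : FlowGraph V) (T : ParentTree V)
    (hroot : T.root = G.s) :
    (ParentProperty G T ∧ SiblingProperty G T) ↔ IsDomTree G T := by
  constructor
  · rintro ⟨hP, hS⟩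
    refine ⟨hroot, fun v hv => ⟨dom_of_anc G T hroot hP ⟨1, rfl⟩,
      parent_ne T (by rwa [hroot]), fun u hu hne => ?_⟩⟩
    exact dom_of_anc G T hroot hP (anc_parent T (anc_of_dom_s4 G T hroot hP hS v u hu) hne)
  · rintro ⟨-, hD⟩
    constructor
    · intro v w ha
      have hw : w ≠ G.s := by
        rintro rfl; exact G.no_enter v ha
      obtain ⟨h1, h2, -⟩ := hD w hw
      have h3 := domOn_pred h1 h2 ha
      generalize T.parent w = x at h3
      clear ha
      revert h3
      refine tree_induct T (fun v => DomOn G.A G.s x v → T.Anc x v) ?_ ?_ v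
      · intro h
        rw [hroot] at h
        exact ⟨0, by rw [hroot, domOn_start h]; rfl⟩
      · intro v hv ih h
        by_cases hx : x = v
        · exact ⟨0, hx.symm⟩
        · exact anc_of_parent T (ih ((hD v (by rwa [← hroot])).2.2 x h hx))
    · intro v w hv hw hne hp hd
      rw [hroot] at hv hw
      have h := (hD w hw).2.2 v hd hne
      rw [← hp] at h
      exact (hD v hv).2.1 (domOn_antisymm G (hD v hv).1 h)
end

section
/- Let T be a rooted tree on the vertex set of a flow graph G that has the parent property, together with a low-high order on G. Let r : V \ {s} → V be a function such that for every v ≠ s, (r(v), v) ∈ A and either r(v) = t(v), or r(v) > v in the low-high order and r(v) is not a descendant of v in T. Let R be the directed graph on V with arc set {(r(v), v) : v ≠ s}. Then for every vertex v ≠ s, there is a path in R from t(v) to v that contains only t(v) and vertices that are no less than v in the low-high order. -/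
variable {V : Type*}

theorem walk_of_rtg {R : V → V → Prop} {P : V → Prop} {u v : V} (hu : P u)
    (h : Relation.ReflTransGen (fun a b => R a b ∧ P b) u v) :
    ∃ p : List V, IsWalk R u v p ∧ ∀ x ∈ p, P x := by
  induction h with
  | refl => exact ⟨[u], ⟨List.isChain_singleton u, by simp, by simp⟩, by simpa using hu⟩
  | @tail b c _ hbc ih =>
    obtain ⟨p, ⟨h1, h2, h3⟩, h4⟩ := ih
    refine ⟨p ++ [c], ⟨?_, ?_, by simp⟩, ?_⟩
    · refine List.IsChain.append h1 (by simp) ?_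
      intro x hx y hy
      rw [h3] at hx
      simp at hx hy
      subst hx hy
      exact hbc.1
    · cases p with
      | nil => simp at h2
      | cons a l => simpa using h2
    · intro x hx
      rcases List.mem_append.1 hx with hx | hx
      · exact h4 x hx
      · simp at hx
        subst hx
        exact hbc.2

theorem anc_cases (T : ParentTree V) {a v : V} (h : T.Anc a v) :
    a = v ∨ T.Anc a (T.parent v) := by
  obtain ⟨n, hn⟩ := h
  cases n with
  | zero => left; exact hn.symm
  | succ n => right; exact ⟨n, by simpa using hn⟩

theorem main_rtg [Fintype V] (G : FlowGraph V) (T : ParentTree V)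
    (hroot : T.root = G.s) (hpp : ParentProperty G T)
    (ord : V → ℕ) (hlh : LowHigh G T ord)
    (r : V → V)
    (hr : ∀ v : V, v ≠ G.s → G.A (r v) v ∧
      (r v = T.parent v ∨ (ord v < ord (r v) ∧ ¬ T.Anc v (r v))))
    (m : ℕ) : ∀ (v : V), v ≠ G.s → (Finset.univ.sup ord) - ord v = m →
    Relation.ReflTransGen (fun a b => (b ≠ G.s ∧ r b = a) ∧
      (b = T.parent v ∨ ord v ≤ ord b)) (T.parent v) v := by
  induction m using Nat.strong_induction_on with
  | _ m IH =>
  intro v hv hm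
  obtain ⟨⟨hinj, hmono, hcons⟩, -⟩ := hlh
  have hle : ∀ x, ord x ≤ Finset.univ.sup ord := fun x => Finset.le_sup (Finset.mem_univ x)
  have inner : ∀ n x, T.parent^[n] x = T.parent v →
      (x = T.parent v ∨ (ord v < ord x ∧ ¬ T.Anc v x)) →
      Relation.ReflTransGen (fun a b => (b ≠ G.s ∧ r b = a) ∧
        (b = T.parent v ∨ ord v ≤ ord b)) (T.parent v) x := by
    intro n
    induction n with
    | zero =>
      intro x hx _
      have : x = T.parent v := hx
      rw [this]
    | succ n ih =>
      intro x hx hx2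
      rcases hx2 with rfl | ⟨hlt, hna⟩
      · exact .refl
      have hxs : x ≠ G.s := by
        rintro rfl
        have := hmono T.root v (T.reaches_root v)
        rw [hroot] at this
        omega
      have hpx : T.parent^[n] (T.parent x) = T.parent v := by simpa using hx
      have hP : T.parent x = T.parent v ∨ (ord v < ord (T.parent x) ∧ ¬ T.Anc v (T.parent x)) := by
        have hna' : ¬ T.Anc v (T.parent x) := by
          rintro ⟨k, hk⟩
          exact hna ⟨k+1, by simpa using hk⟩
        by_cases h : ord v < ord (T.parent x)
        · exact .inr ⟨h, hna'⟩
        · left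
          have ha : T.Anc (T.parent x) v :=
            hcons (T.parent x) (T.parent x) v x ⟨0, rfl⟩ ⟨1, rfl⟩ (by omega) (by omega)
          rcases anc_cases T ha with h1 | h1
          · exact absurd ⟨0, h1⟩ hna'
          · exact hinj (le_antisymm (hmono _ _ h1) (hmono _ _ ⟨n, hpx⟩))
      refine (ih _ hpx hP).trans ?_
      refine Relation.ReflTransGen.mono ?_ _ _ (IH (Finset.univ.sup ord - ord x) ?_ x hxs rfl)
      · rintro a b ⟨h1, h2⟩
        refine ⟨h1, ?_⟩
        rcases h2 with rfl | h2
        · rcases hP with h | h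
          · exact .inl h
          · exact .inr h.1.le
        · right; omega
      · have := hle x
        omega
  obtain ⟨hA, hc⟩ := hr v hv
  obtain ⟨n, hn⟩ := hpp _ _ hA
  exact (inner n (r v) hn hc).tail ⟨⟨hv, rfl⟩, .inr le_rfl⟩

/-- Given a tree `T` with the parent property and a low-high order, and a
function `r` choosing for each `v ≠ s` an arc `(r(v), v)` of `G` with either
`r(v) = t(v)`, or `r(v) > v` and `r(v)` not a descendant of `v`, the graph `R`
with arcs `(r(v), v)` contains, for each `v ≠ s`, a path from `t(v)` to `v`
containing only `t(v)` and vertices no less than `v` in the order. -/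
theorem stmt5 [Fintype V] (G : FlowGraph V) (T : ParentTree V)
    (hroot : T.root = G.s) (hpp : ParentProperty G T)
    (ord : V → ℕ) (hlh : LowHigh G T ord)
    (r : V → V)
    (hr : ∀ v : V, v ≠ G.s → G.A (r v) v ∧
      (r v = T.parent v ∨ (ord v < ord (r v) ∧ ¬ T.Anc v (r v))))
    (v : V) (hv : v ≠ G.s) :
    ∃ p : List V,
      IsWalk (fun a b => b ≠ G.s ∧ r b = a) (T.parent v) v p ∧
      ∀ x ∈ p, x = T.parent v ∨ ord v ≤ ord x := by
  exact walk_of_rtg (.inl rfl) (main_rtg G T hroot hpp ord hlh r hr _ v hv rfl)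
end

section
/- Let T be a rooted tree on the vertex set of a flow graph G that has the parent property, and let S be the vertex set of a strongly connected subgraph of G. Then either S = {s}, or there exist a vertex x and a nonempty set W of children of x in T such that W ⊆ S and every vertex of S is a descendant in T of some member of W (that is, S consists of a set of siblings in T and possibly some of their descendants in T). -/
variable {V : Type*}

theorem walk_induct_aux (A : V → V → Prop) (S : Set V) (P : V → Prop)
    (hstep : ∀ a b, A a b → b ∈ S → P a → P b) (v : V) (p : List V) :
    ∀ u, P u → IsWalk A u v p → (∀ x ∈ p, x ∈ S) → P v := by
  induction p with
  | nil => intro u _ h; simp [IsWalk] at h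
  | cons a l ih =>
    rintro u hu ⟨hc, hh, hl⟩ hS
    have hau : a = u := by simpa using hh
    subst hau
    cases l with
    | nil =>
      have hav : a = v := by simpa using hl
      exact hav ▸ hu
    | cons b l =>
      have hc2 := List.isChain_cons_cons.1 hc
      refine ih b (hstep a b hc2.1 (hS b (by simp)) hu) ⟨hc2.2, by simp, ?_⟩
        (fun x hx => hS x (List.mem_cons_of_mem _ hx))
      simpa [List.getLast?_cons_cons] using hl

open Classical in
/-- Depth of a vertex in the tree. -/
noncomputable def treeDepth (T : ParentTree V) (v : V) : ℕ := Nat.find (T.reaches_root v)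

theorem treeDepth_zero (T : ParentTree V) (v : V) (h : treeDepth T v = 0) : v = T.root := by
  classical
  have := Nat.find_spec (T.reaches_root v)
  unfold treeDepth at h
  rw [h] at this
  exact this

theorem treeDepth_root (T : ParentTree V) : treeDepth T T.root = 0 := by
  classical
  exact (Nat.find_eq_zero _).2 rfl

theorem treeDepth_parent (T : ParentTree V) (v : V) (h : v ≠ T.root) :
    treeDepth T v = treeDepth T (T.parent v) + 1 := by
  classical
  unfold treeDepth
  convert Nat.find_comp_succ (T.reaches_root v) (T.reaches_root (T.parent v)) h using 2
  exact Nat.find_congr' (fun {n} => Iff.rfl)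

theorem treeDepth_iter_le (T : ParentTree V) (k : ℕ) :
    ∀ v, treeDepth T (T.parent^[k] v) ≤ treeDepth T v := by
  induction k with
  | zero => intro v; exact le_rfl
  | succ k ih =>
    intro v
    rw [Function.iterate_succ_apply]
    refine (ih _).trans ?_
    by_cases h : v = T.root
    · rw [h, T.parent_root]
    · have := treeDepth_parent T v h
      omega

theorem iter_eq_of_depth (T : ParentTree V) (k : ℕ) (x z : V) (h : T.parent^[k] x = z)
    (hd : treeDepth T x ≤ treeDepth T z) : z = x := by
  cases k with
  | zero => exact h.symm
  | succ k =>
    by_cases hx : x = T.root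
    · subst hx
      rw [treeDepth_root] at hd
      rw [← h]
      exact Function.iterate_fixed T.parent_root _
    · have h1 := treeDepth_iter_le T k (T.parent x)
      rw [Function.iterate_succ_apply] at h
      rw [h] at h1
      have := treeDepth_parent T x hx
      omega

/-- If `T` has the parent property and `S` is the vertex set of a strongly
connected subgraph of `G`, then either `S = {s}` or `S` consists of a nonempty
set `W` of children of some vertex `x` in `T` together with, possibly, some of
their descendants. -/
theorem stmt8 [Fintype V] (G : FlowGraph V) (T : ParentTree V)
    (hroot : T.root = G.s) (hpp : ParentProperty G T)
    (S : Set V) (hS : StronglyConnectedSet G.A S) :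
    S = {G.s} ∨
    ∃ (x : V) (W : Set V), W.Nonempty ∧ W ⊆ S ∧
      (∀ w ∈ W, w ≠ T.root ∧ T.parent w = x) ∧
      ∀ y ∈ S, ∃ w ∈ W, T.Anc w y := by
  by_cases hs : G.s ∈ S
  · left
    ext y
    constructor
    · intro hy
      by_contra hne
      obtain ⟨p, hp, hpS⟩ := hS.2 y hy _ hs
      exact walk_induct_aux G.A S (fun a => a ≠ G.s)
        (fun a b hab _ _ hb => G.no_enter a (hb ▸ hab)) G.s p y hne hp hpS rfl
    · rintro rfl
      exact hs
  · right
    have hne : ∀ w ∈ S, w ≠ T.root := by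
      intro w hw h
      exact hs (hroot ▸ h ▸ hw)
    obtain ⟨w0, hw0, hmin⟩ :
        ∃ w0 ∈ S, ∀ u ∈ S, treeDepth T w0 ≤ treeDepth T u := by
      obtain ⟨w0, hw0, h⟩ := WellFounded.has_min
        (InvImage.wf (treeDepth T) Nat.lt_wfRel.wf) S hS.1
      exact ⟨w0, hw0, fun u hu => not_lt.1 (h u hu)⟩
    refine ⟨T.parent w0, {w | w ∈ S ∧ T.parent w = T.parent w0}, ⟨w0, hw0, rfl⟩,
      fun w hw => hw.1, fun w hw => ⟨hne w hw.1, hw.2⟩, ?_⟩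
    intro y hy
    obtain ⟨p, hp, hpS⟩ := hS.2 w0 hw0 y hy
    refine walk_induct_aux G.A S
      (fun y => ∃ w ∈ {w | w ∈ S ∧ T.parent w = T.parent w0}, T.Anc w y)
      ?_ y p w0 ⟨w0, ⟨hw0, rfl⟩, 0, rfl⟩ hp hpS
    rintro v u hvu hu ⟨w, hw, m, hm⟩
    obtain ⟨n, hn⟩ := hpp v u hvu
    rcases le_or_gt n m with hnm | hnm
    · refine ⟨w, hw, m - n + 1, ?_⟩
      rw [Function.iterate_succ_apply, ← hn, ← Function.iterate_add_apply,
        Nat.sub_add_cancel hnm, hm]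
    · refine ⟨u, ⟨hu, ?_⟩, 0, rfl⟩
      apply iter_eq_of_depth T (n - m - 1)
      · rw [← hw.2, ← hm, ← hn, ← Function.iterate_succ_apply, ← Function.iterate_add_apply]
        congr 1
        omega
      · have h1 := treeDepth_parent T u (hne u hu)
        have h2 := treeDepth_parent T w0 (hne w0 hw0)
        have h3 := hmin u hu
        omega
end

section
/- Let T be a rooted tree on the vertex set of a flow graph G that has the parent property. If (v', w) is the derived arc of an arc (v, w) ∈ A, then there is a path in G from v' to w containing only w and descendants of v' in T. -/
variable {V : Type*}

theorem anc_step_aux (T : ParentTree V) {a x : V} (h : T.Anc a x) :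
    a = x ∨ T.Anc a (T.parent x) := by
  obtain ⟨n, hn⟩ := h
  cases n with
  | zero => exact Or.inl hn.symm
  | succ n => exact Or.inr ⟨n, hn⟩

theorem anc_trans_aux (T : ParentTree V) {a b c : V} (h : T.Anc a b) (h' : T.Anc b c) :
    T.Anc a c := by
  obtain ⟨n, rfl⟩ := h
  obtain ⟨m, rfl⟩ := h'
  exact ⟨n + m, Function.iterate_add_apply _ _ _ _⟩

theorem isWalk_snoc_aux {A : V → V → Prop} {u v w : V} {p : List V} (h : IsWalk A u v p)
    (hA : A v w) : IsWalk A u w (p ++ [w]) := by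
  obtain ⟨h1, h2, h3⟩ := h
  refine ⟨?_, ?_, ?_⟩
  · refine List.IsChain.append h1 (List.isChain_singleton w) ?_
    intro x hx y hy
    simp [h3] at hx hy
    subst hx hy
    exact hA
  · simp [List.head?_append, h2]
  · simp

theorem isWalk_single_aux (A : V → V → Prop) (u : V) : IsWalk A u u [u] :=
  ⟨List.isChain_singleton u, rfl, rfl⟩

theorem walk_desc_aux (G : FlowGraph V) (T : ParentTree V)
    (hroot : T.root = G.s) (hpp : ParentProperty G T) (a : V) (q : List V) :
    ∀ x, IsWalk G.A G.s x q → T.Anc a x →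
      ∃ p : List V, IsWalk G.A a x p ∧ ∀ z ∈ p, T.Anc a z := by
  induction q using List.reverseRecOn with
  | nil => intro x hx; simp [IsWalk] at hx
  | append_singleton q y ih =>
    intro x hx ha
    obtain ⟨h1, h2, h3⟩ := hx
    have hy : y = x := by simpa using h3
    subst hy
    have triv : a = y → ∃ p : List V, IsWalk G.A a y p ∧ ∀ z ∈ p, T.Anc a z := by
      rintro rfl
      exact ⟨[a], isWalk_single_aux _ _, by simpa using ha⟩
    rcases anc_step_aux T ha with h | h
    · exact triv h
    rcases List.eq_nil_or_concat q with rfl | ⟨q', u, rfl⟩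
    · apply triv
      have hs : y = G.s := by simpa using h2
      obtain ⟨n, hn⟩ := ha
      rw [hs, ← hroot, Function.iterate_fixed T.parent_root] at hn
      rw [hs, ← hroot, hn]
    · have hA : G.A u y := by
        have := (List.isChain_append.1 h1).2.2
        exact this u (by simp) y (by simp)
      have hw : IsWalk G.A G.s u (q' ++ [u]) := by
        refine ⟨by simpa [List.Chain'] using (List.isChain_append.1 h1).1, ?_, by simp⟩
        cases q' <;> simpa using h2
      obtain ⟨p, hp, hp'⟩ := ih u (by simpa using hw) (anc_trans_aux T h (hpp u y hA))
      refine ⟨p ++ [y], isWalk_snoc_aux hp hA, ?_⟩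
      intro z hz
      rcases List.mem_append.1 hz with hz | hz
      · exact hp' z hz
      · rw [List.mem_singleton.1 hz]; exact ha

/-- If `T` has the parent property and `(a, w)` is the derived arc of an arc
`(v, w)` of `G`, then `G` contains a path from `a` to `w` containing only `w`
and descendants of `a` in `T`. -/
theorem stmt10 [Fintype V] (G : FlowGraph V) (T : ParentTree V)
    (hroot : T.root = G.s) (hpp : ParentProperty G T)
    (v w a : V) (h : IsDerivedArcOf G T v w a) :
    ∃ p : List V, IsWalk G.A a w p ∧ ∀ x ∈ p, x = w ∨ T.Anc a x := by
  obtain ⟨hA, -, h⟩ := h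
  have key : ∃ p : List V, IsWalk G.A a v p ∧ ∀ z ∈ p, T.Anc a z := by
    rcases h with ⟨-, rfl⟩ | ⟨-, -, -, h⟩
    · exact ⟨[a], isWalk_single_aux _ _, by simpa using ⟨0, rfl⟩⟩
    · obtain ⟨q, hq⟩ := G.reach v
      exact walk_desc_aux G T hroot hpp a q v hq h
  obtain ⟨p, hp, hp'⟩ := key
  refine ⟨p ++ [w], isWalk_snoc_aux hp hA, ?_⟩
  intro x hx
  rcases List.mem_append.1 hx with hx | hx
  · exact Or.inr (hp' x hx)
  · exact Or.inl (List.mem_singleton.1 hx)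
end

section
/- Let T be a rooted tree on the vertex set of a flow graph G that has the parent property, and let G' be the derived graph of G with respect to T. If G is acyclic, then G' is acyclic. -/
variable {V : Type*}

theorem walk_reflTransGen {A : V → V → Prop} : ∀ (p : List V) (u v : V),
    IsWalk A u v p → Relation.ReflTransGen A u v := by
  intro p
  induction p with
  | nil => rintro u v ⟨_, h, _⟩; simp at h
  | cons x l ih =>
    rintro u v ⟨hc, hh, hl⟩
    have hx : x = u := by simpa using hh
    subst hx
    cases l with
    | nil =>
      have : x = v := by simpa using hl
      subst this
      exact Relation.ReflTransGen.refl
    | cons y l =>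
      have hc' := List.isChain_cons_cons.1 hc
      refine Relation.ReflTransGen.head hc'.1 (ih y v ⟨hc'.2, by simp, ?_⟩)
      simpa using hl

theorem walk_transGen {A : V → V → Prop} (p : List V) (u v : V)
    (h : IsWalk A u v p) (h2 : 2 ≤ p.length) : Relation.TransGen A u v := by
  obtain ⟨hc, hh, hl⟩ := h
  match p, h2 with
  | x :: y :: l, _ =>
    have hx : x = u := by simpa using hh
    subst hx
    have hc' := List.isChain_cons_cons.1 hc
    refine Relation.TransGen.head' hc'.1 (walk_reflTransGen (y :: l) y v ⟨hc'.2, by simp, ?_⟩)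
    simpa using hl

theorem transGen_walk {A : V → V → Prop} {u v : V} (h : Relation.TransGen A u v) :
    ∃ p : List V, IsWalk A u v p ∧ 2 ≤ p.length := by
  induction h using Relation.TransGen.head_induction_on with
  | @single a h => exact ⟨[a, v], ⟨List.isChain_cons_cons.2 ⟨h, List.isChain_singleton _⟩, by simp, by simp⟩, by simp⟩
  | @head a c h _ ih =>
    obtain ⟨p, ⟨hc, hh, hl⟩, h2⟩ := ih
    match p, h2 with
    | x :: y :: l, _ =>
      have hx : x = c := by simpa using hh
      subst hx
      exact ⟨a :: x :: y :: l, ⟨List.isChain_cons_cons.2 ⟨h, hc⟩, by simp, by simpa using hl⟩, by simp⟩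

theorem anc_reach (G : FlowGraph V) (T : ParentTree V)
    (hroot : T.root = G.s) (hpp : ParentProperty G T) (w : V) :
    ∀ a, T.Anc a w → Relation.ReflTransGen G.A a w := by
  obtain ⟨p, hp⟩ := G.reach w
  have h := walk_reflTransGen p _ _ hp
  clear hp p
  induction h with
  | refl =>
    rintro a ⟨n, hn⟩
    have hf : T.parent^[n] T.root = T.root := Function.iterate_fixed T.parent_root n
    rw [← hroot, hf] at hn
    rw [← hn, hroot]
  | @tail u w _ huw ih =>
    rintro a ⟨n, hn⟩
    cases n with
    | zero =>
      have : w = a := hn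
      rw [this]
    | succ n =>
      obtain ⟨m, hm⟩ := hpp u w huw
      refine (ih a ⟨n + m, ?_⟩).tail huw
      rw [Function.iterate_add_apply, hm, ← hn, Function.iterate_succ_apply]

/-- If `T` has the parent property and `G` is acyclic, then the derived graph
of `G` with respect to `T` is acyclic. -/
theorem stmt11 [Fintype V] (G : FlowGraph V) (T : ParentTree V)
    (hroot : T.root = G.s) (hpp : ParentProperty G T)
    (hacyc : Acyclic G.A) :
    Acyclic (DerivedArc G T) := by
  rintro ⟨v, p, hp, h2⟩
  apply hacyc
  refine ⟨v, transGen_walk ?_⟩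
  have key : ∀ a b, DerivedArc G T a b → Relation.TransGen G.A a b := by
    rintro a b ⟨x, hx, -, h⟩
    refine Relation.TransGen.tail' (anc_reach G T hroot hpp x a ?_) hx
    rcases h with ⟨-, h⟩ | ⟨-, -, -, h⟩
    · exact ⟨0, h.symm⟩
    · exact h
  have key2 : ∀ a b, Relation.TransGen (DerivedArc G T) a b → Relation.TransGen G.A a b := by
    intro a b h
    induction h with
    | single h => exact key _ _ h
    | tail _ h ih => exact ih.trans (key _ _ h)
  exact key2 v v (walk_transGen p v v hp h2)
end

section
/- Let T be a rooted tree on the vertex set of a flow graph G that has the parent property, and let G' be the derived graph of G with respect to T (which is itself a flow graph with start vertex s). Then T has the sibling property with respect to G if and only if T has the sibling property with respect to G'. That is, T is the dominator tree of G if and only if T is the dominator tree of G'. -/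
variable {V : Type*}

/-- Vertices reachable from `s` by a walk all of whose vertices satisfy `P`. -/
inductive PReach (A : V → V → Prop) (s : V) (P : V → Prop) : V → Prop
  | base : P s → PReach A s P s
  | step {a b : V} : PReach A s P a → A a b → P b → PReach A s P b

theorem PReach.mono {A : V → V → Prop} {s : V} {P Q : V → Prop} (h : ∀ x, P x → Q x) {x : V}
    (hx : PReach A s P x) : PReach A s Q x := by
  induction hx with
  | base h1 => exact .base (h _ h1)
  | step _ h2 h3 ih => exact .step ih h2 (h _ h3)

theorem preach_of_list {A : V → V → Prop} {s : V} {P : V → Prop} {w : V} (l : List V) :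
    ∀ u, PReach A s P u → List.IsChain A (u :: l) → (∀ x ∈ l, P x) →
      (u :: l).getLast? = some w → PReach A s P w := by
  induction l with
  | nil => intro u hu _ _ h; simp at h; exact h ▸ hu
  | cons b l ih =>
    intro u hu hc hP hl
    rw [List.isChain_cons_cons] at hc
    refine ih b (.step hu hc.1 (hP b (by simp))) hc.2 (fun x hx => hP x (by simp [hx])) ?_
    rwa [List.getLast?_cons_cons] at hl

theorem preach_iff {A : V → V → Prop} {s : V} {P : V → Prop} {w : V} :
    PReach A s P w ↔ ∃ p, IsWalk A s w p ∧ ∀ x ∈ p, P x := by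
  constructor
  · intro h
    induction h with
    | base h => exact ⟨[s], ⟨List.isChain_singleton _, rfl, rfl⟩, by simpa using h⟩
    | @step a b _ h2 h3 ih =>
      obtain ⟨p, ⟨hc, hh, hl⟩, hp⟩ := ih
      refine ⟨p ++ [b], ⟨?_, ?_, ?_⟩, ?_⟩
      · refine List.IsChain.append hc (List.isChain_singleton _) ?_
        intro x hx y hy
        rw [hl] at hx
        simp at hx hy
        subst hx; subst hy; exact h2
      · cases p with
        | nil => simp at hh
        | cons c p => simpa using hh
      · simp
      · intro x hx
        rcases List.mem_append.1 hx with hx | hx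
        · exact hp x hx
        · simp at hx; exact hx ▸ h3
  · rintro ⟨p, ⟨hc, hh, hl⟩, hp⟩
    cases p with
    | nil => simp at hh
    | cons c p =>
      simp at hh
      subst hh
      exact preach_of_list p c (.base (hp c (by simp))) hc (fun x hx => hp x (by simp [hx])) hl

theorem domOn_iff_s12 {A : V → V → Prop} {s v w : V} :
    DomOn A s v w ↔ ¬ PReach A s (fun x => x ≠ v) w := by
  rw [preach_iff]
  unfold DomOn
  constructor
  · rintro h ⟨p, hp, hv⟩
    exact hv v (h p hp) rfl
  · intro h p hp
    by_contra hv
    exact h ⟨p, hp, fun x hx hxv => hv (hxv ▸ hx)⟩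

namespace ParentTree

variable (T : ParentTree V)

theorem anc_refl (x : V) : T.Anc x x := ⟨0, rfl⟩

theorem anc_parent (x : V) : T.Anc (T.parent x) x := ⟨1, rfl⟩

variable {T}

theorem Anc.trans {x y z : V} (h : T.Anc x y) (h' : T.Anc y z) : T.Anc x z := by
  obtain ⟨n, rfl⟩ := h
  obtain ⟨m, rfl⟩ := h'
  exact ⟨n + m, by rw [Function.iterate_add_apply]⟩

theorem Anc.cases {x y : V} (h : T.Anc x y) : x = y ∨ T.Anc x (T.parent y) := by
  obtain ⟨n, rfl⟩ := h
  cases n with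
  | zero => exact .inl rfl
  | succ n => exact .inr ⟨n, rfl⟩

theorem iter_root (n : ℕ) : T.parent^[n] T.root = T.root :=
  Function.iterate_fixed T.parent_root n

theorem Anc.of_root {x : V} (h : T.Anc x T.root) : x = T.root := by
  obtain ⟨n, rfl⟩ := h
  exact iter_root n

theorem eq_root_of_iter {y : V} {k : ℕ} (h : T.parent^[k + 1] y = y) : y = T.root := by
  obtain ⟨m, hm⟩ := T.reaches_root y
  have h1 : T.parent^[(k + 1) * m] y = y := by
    rw [Function.iterate_mul]; exact Function.iterate_fixed h m
  have h2 : (k + 1) * m = k * m + m := by ring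
  rw [h2, Function.iterate_add_apply, hm, iter_root] at h1
  exact h1.symm

theorem Anc.antisymm {x y : V} (h : T.Anc x y) (h' : T.Anc y x) : x = y := by
  obtain ⟨n, rfl⟩ := h
  obtain ⟨m, hm⟩ := h'
  cases n with
  | zero => rfl
  | succ n =>
    rw [← Function.iterate_add_apply] at hm
    have := eq_root_of_iter (k := m + n) hm
    rw [this, iter_root]

theorem parent_ne {x : V} (h : x ≠ T.root) : T.parent x ≠ x :=
  fun h' => h (eq_root_of_iter (k := 0) h')

theorem exists_child {c y : V} (h : T.Anc c y) (hne : y ≠ c) :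
    ∃ a, T.parent a = c ∧ a ≠ T.root ∧ T.Anc a y := by
  obtain ⟨n, hn⟩ := h
  induction n generalizing y with
  | zero => exact absurd hn hne
  | succ n ih =>
    by_cases hy : T.parent y = c
    · refine ⟨y, hy, ?_, T.anc_refl y⟩
      rintro rfl
      exact hne (T.parent_root ▸ hy)
    · obtain ⟨a, h1, h2, h3⟩ := ih hy hn
      exact ⟨a, h1, h2, h3.trans (T.anc_parent y)⟩

theorem not_anc_sibling {a v : V} (ha : a ≠ T.root) (hne : a ≠ v)
    (hp : T.parent a = T.parent v) : ¬ T.Anc a v := by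
  intro h
  rcases h.cases with h | h
  · exact hne h
  · rw [← hp] at h
    exact parent_ne ha ((T.anc_parent a).antisymm h)

end ParentTree

section
variable {A : V → V → Prop} {T : ParentTree V}

theorem preach_anc (hpp : ∀ v w, A v w → T.Anc (T.parent w) v) {P : V → Prop} {x : V}
    (hx : PReach A T.root P x) : ∀ y, T.Anc y x → PReach A T.root P y := by
  induction hx with
  | base h => intro y hy; rw [hy.of_root]; exact .base h
  | step h1 h2 h3 ih =>
    intro y hy
    rcases hy.cases with rfl | hy
    · exact .step h1 h2 h3
    · exact ih y (hy.trans (hpp _ _ h2))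

theorem preach_prop {s : V} {P : V → Prop} {x : V} (hx : PReach A s P x) : P x := by
  cases hx <;> assumption

/-- There is a walk to `v` avoiding its proper descendants. -/
theorem preach_min (hpp : ∀ v w, A v w → T.Anc (T.parent w) v) {v : V}
    (hv : PReach A T.root (fun _ => True) v) :
    PReach A T.root (fun x => ¬ (T.Anc v x ∧ x ≠ v)) v := by
  have key : ∀ x, PReach A T.root (fun _ => True) x →
      PReach A T.root (fun x => ¬ (T.Anc v x ∧ x ≠ v)) x ∨
      PReach A T.root (fun x => ¬ (T.Anc v x ∧ x ≠ v)) v := by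
    intro x hx
    induction hx with
    | base _ => exact .inl (.base fun h => h.2 h.1.of_root.symm)
    | @step a b _ h2 _ ih =>
      rcases ih with ih | ih
      · by_cases hb : T.Anc v b ∧ b ≠ v
        · right
          rcases hb.1.cases with h | h
          · exact absurd h.symm hb.2
          · exact preach_anc hpp ih v (h.trans (hpp _ _ h2))
        · exact .inl (.step ih h2 hb)
      · exact .inr ih
  exact (key v hv).elim id id

theorem preach_desc (hpp : ∀ v w, A v w → T.Anc (T.parent w) v) {P : V → Prop} {x y : V}
    (hx : PReach A T.root P x) (hP : ∀ z, T.Anc x z → P z)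
    (hy : PReach A T.root (fun _ => True) y) : T.Anc x y → PReach A T.root P y := by
  induction hy with
  | base _ => intro h; rw [h.of_root] at hx; exact hx
  | step _ h2 _ ih =>
    intro h
    rcases h.cases with h' | h'
    · exact h' ▸ hx
    · exact .step (ih (h'.trans (hpp _ _ h2))) h2 (hP _ h)

theorem domTree_iff (hr : ∀ v, PReach A T.root (fun _ => True) v)
    (hpp : ∀ v w, A v w → T.Anc (T.parent w) v) :
    IsDomTreeOn A T.root T ↔ SiblingPropertyOn A T.root T := by
  constructor
  · rintro ⟨_, h⟩ v w hv hw hne hp hd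
    have h1 := (h w hw).2.2 v hd hne
    rw [domOn_iff_s12, ← hp] at h1
    refine h1 ((preach_min hpp (hr (T.parent v))).mono ?_)
    rintro x hx rfl
    exact hx ⟨T.anc_parent x, (ParentTree.parent_ne hv).symm⟩
  · intro hs
    have key : ∀ u n v, T.parent^[n] v = T.root → ¬ T.Anc u v →
        PReach A T.root (fun x => x ≠ u) v := by
      intro u n
      induction n with
      | zero =>
        intro v hv hu
        obtain rfl : v = T.root := hv
        exact .base fun h => hu (h ▸ T.anc_refl _)
      | succ n ih =>
        intro v hv hu
        have hu' : ¬ T.Anc u (T.parent v) := fun h => hu (h.trans (T.anc_parent v))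
        have h1 := ih (T.parent v) hv hu'
        by_cases hd : T.Anc (T.parent v) u
        · obtain ⟨a, ha, har, hau⟩ := ParentTree.exists_child hd
            (fun h => hu' (h ▸ T.anc_refl _))
          by_cases hav : a = v
          · subst hav
            refine (preach_min hpp (hr a)).mono ?_
            rintro x hx rfl
            exact hx ⟨hau, fun h => hu (h ▸ T.anc_refl _)⟩
          · by_cases hvr : v = T.root
            · rw [hvr, T.parent_root] at h1
              rw [hvr]
              exact h1
            have h2 := hs a v har hvr hav ha
            rw [domOn_iff_s12, not_not] at h2
            -- a walk avoiding `a` avoids all descendants of `a`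
            by_contra hcon
            have h3 : ∀ x, PReach A T.root (fun x => x ≠ a) x →
                PReach A T.root (fun x => x ≠ u) x := by
              intro x hx
              induction hx with
              | base h =>
                exact .base fun h' => h (by rw [← h'] at hau; exact hau.of_root.symm)
              | step g1 g2 g3 ih =>
                refine .step ih g2 ?_
                rintro rfl
                exact preach_prop (preach_anc hpp (.step g1 g2 g3) a hau) rfl
            exact hcon (h3 v h2)
        · exact preach_desc hpp h1 (fun z hz h => hd (h ▸ hz)) (hr v) (T.anc_parent v)
    refine ⟨rfl, fun v hv => ⟨?_, ParentTree.parent_ne hv, ?_⟩⟩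
    · rw [domOn_iff_s12]
      intro h
      exact preach_prop (preach_anc hpp h _ (T.anc_parent v)) rfl
    · intro u hu hne
      rw [domOn_iff_s12] at hu ⊢
      intro h
      obtain ⟨n, hn⟩ := T.reaches_root v
      refine hu (key u n v hn fun ha => ?_)
      rcases ha.cases with ha | ha
      · exact hne ha
      · exact preach_prop (preach_anc hpp h _ ha) rfl

theorem derived_pp (G : FlowGraph V) (v w : V) (h : DerivedArc G T v w) :
    T.Anc (T.parent w) v := by
  obtain ⟨x, _, _, ⟨h1, h2⟩ | ⟨_, _, h3, _⟩⟩ := h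
  · rw [h2, h1]; exact T.anc_refl _
  · rw [← h3]; exact T.anc_parent _

theorem derived_reach (G : FlowGraph V) (hpp : ParentProperty G T) {P : V → Prop} {x : V}
    (hx : PReach G.A T.root P x) : ∀ y, T.Anc y x → PReach (DerivedArc G T) T.root P y := by
  induction hx with
  | base h => intro y hy; rw [hy.of_root]; exact .base h
  | @step a b _ h2 h3 ih =>
    intro y hy
    have hp := hpp _ _ h2
    rcases hy.cases with rfl | hy
    · by_cases hya : T.Anc y a
      · exact ih y hya
      by_cases hpa : a = T.parent y
      · exact .step (ih a (T.anc_refl a)) ⟨a, h2, hya, .inl ⟨hpa, rfl⟩⟩ h3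
      · obtain ⟨c, hc, hcr, hca⟩ := ParentTree.exists_child hp hpa
        exact .step (ih c hca) ⟨a, h2, hya, .inr ⟨hpa, hcr, hc, hca⟩⟩ h3
    · exact ih y (hy.trans hp)

theorem derived_back (G : FlowGraph V) (hpp : ParentProperty G T)
    (hr : ∀ v, PReach G.A T.root (fun _ => True) v) {v x : V} (hv : v ≠ T.root)
    (hx : PReach (DerivedArc G T) T.root (fun x => x ≠ v) x) :
    x ≠ T.root → T.parent v = T.parent x → PReach G.A T.root (fun x => x ≠ v) x := by
  induction hx with
  | base _ => intro h; exact absurd rfl h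
  | @step a b h1 h2 h3 ih =>
    intro hb hp
    obtain ⟨y, hy, _, ⟨rfl, rfl⟩ | ⟨_, har, hab, hay⟩⟩ := h2
    · refine .step ((preach_min hpp (hr _)).mono ?_) hy h3
      rintro z hz rfl
      exact hz ⟨hp ▸ T.anc_parent z, by rw [← hp]; exact (ParentTree.parent_ne hv).symm⟩
    · have h4 := ih har (hp.trans hab.symm)
      refine .step (preach_desc hpp h4 ?_ (hr y) hay) hy h3
      rintro z hz rfl
      have haz : a ≠ z := preach_prop (P := fun x => x ≠ z) h1
      exact ParentTree.not_anc_sibling har haz (hab.trans hp.symm) hz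

end

/-- If `T` has the parent property, then `T` has the sibling property with
respect to `G` if and only if it has the sibling property with respect to the
derived graph `G'`; that is, `T` is the dominator tree of `G` if and only if it
is the dominator tree of `G'`. -/
theorem stmt12 [Fintype V] (G : FlowGraph V) (T : ParentTree V)
    (hroot : T.root = G.s) (hpp : ParentProperty G T) :
    (SiblingProperty G T ↔ SiblingPropertyOn (DerivedArc G T) G.s T) ∧
    (IsDomTree G T ↔ IsDomTreeOn (DerivedArc G T) G.s T) := by
  have hr : ∀ v, PReach G.A T.root (fun _ => True) v := by
    intro v
    obtain ⟨p, hp⟩ := G.reach v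
    rw [preach_iff, hroot]
    exact ⟨p, hp, fun _ _ => trivial⟩
  have hr' : ∀ v, PReach (DerivedArc G T) T.root (fun _ => True) v := fun v =>
    derived_reach G hpp (hr v) v (T.anc_refl v)
  have h1 : SiblingProperty G T ↔ SiblingPropertyOn (DerivedArc G T) G.s T := by
    unfold SiblingProperty SiblingPropertyOn
    rw [← hroot]
    constructor
    · intro h v w hv hw hne hp hd
      refine h v w hv hw hne hp ?_
      rw [domOn_iff_s12] at hd ⊢
      exact fun hh => hd (derived_reach G hpp hh w (T.anc_refl w))
    · intro h v w hv hw hne hp hd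
      refine h v w hv hw hne hp ?_
      rw [domOn_iff_s12] at hd ⊢
      exact fun hh => hd (derived_back G hpp hr hv hh hw hp)
  refine ⟨h1, ?_⟩
  have h2 := domTree_iff hr hpp
  have h3 := domTree_iff hr' (derived_pp G)
  rw [hroot] at h2 h3
  exact h2.trans (h1.trans h3.symm)
end

section
/- Let T be a rooted tree on the vertex set of a flow graph G that has the parent property, and let G' be the derived graph of G with respect to T. Then a preorder of T is low-high on G if and only if it is low-high on G'. -/
variable {V : Type*}

theorem anc_parent_root (T : ParentTree V) (ord : V → ℕ) (h : IsTreePreorder T ord) (v : V)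
    (hv : T.Anc v (T.parent v)) : v = T.root := by
  have h1 := h.2.1 _ _ hv
  have h2 := h.2.1 (T.parent v) v ⟨1, rfl⟩
  have h3 : T.parent v = v := h.1 (le_antisymm h2 h1)
  obtain ⟨n, hn⟩ := T.reaches_root v
  rwa [Function.iterate_fixed h3] at hn

theorem anc_sibling (T : ParentTree V) (ord : V → ℕ) (h : IsTreePreorder T ord) (a v : V)
    (ha : a ≠ T.root) (hp : T.parent a = T.parent v) (hv : T.Anc a v) : a = v := by
  obtain ⟨n, hn⟩ := hv
  cases n with
  | zero => exact hn.symm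
  | succ n =>
    rw [Function.iterate_succ_apply, ← hp] at hn
    exact absurd (anc_parent_root T ord h a ⟨n, hn⟩) ha

theorem exists_sibling (T : ParentTree V) (u v : V) (hu : T.Anc (T.parent v) u)
    (hne : u ≠ T.parent v) : ∃ a, a ≠ T.root ∧ T.parent a = T.parent v ∧ T.Anc a u := by
  obtain ⟨n, hn⟩ := hu
  induction n with
  | zero => exact absurd hn hne
  | succ n ih =>
    by_cases hr : T.parent^[n] u = T.root
    · apply ih
      rw [Function.iterate_succ_apply', hr, T.parent_root] at hn
      rw [hr, hn]
    · exact ⟨_, hr, by rwa [Function.iterate_succ_apply'] at hn, n, rfl⟩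

/-- If `T` has the parent property, then a preorder of `T` is low-high on `G`
if and only if it is low-high on the derived graph `G'`. -/
theorem stmt13 [Fintype V] (G : FlowGraph V) (T : ParentTree V)
    (hroot : T.root = G.s) (hpp : ParentProperty G T)
    (ord : V → ℕ) :
    LowHighOn G.A G.s T ord ↔ LowHighOn (DerivedArc G T) G.s T ord := by
  unfold LowHighOn
  refine and_congr_right fun h => forall_congr' fun v => forall_congr' fun hv => ?_
  rw [← hroot] at hv
  have key : G.A (T.parent v) v → DerivedArc G T (T.parent v) v := fun hA =>
    ⟨T.parent v, hA, fun hc => hv (anc_parent_root T ord h v hc), Or.inl ⟨rfl, rfl⟩⟩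
  constructor
  · rintro (hA | ⟨u, w, hu, hw, huv, hvw, hnw⟩)
    · exact Or.inl (key hA)
    by_cases hup : u = T.parent v
    · exact Or.inl (key (hup ▸ hu))
    by_cases hwp : w = T.parent v
    · exact Or.inl (key (hwp ▸ hw))
    have hnu : ¬ T.Anc v u := fun hc => absurd (h.2.1 _ _ hc) (by omega)
    obtain ⟨a, ha, hpa, hau⟩ := exists_sibling T u v (hpp _ _ hu) hup
    obtain ⟨b, hb, hpb, hbw⟩ := exists_sibling T w v (hpp _ _ hw) hwp
    have hbv : b ≠ v := fun e => hnw (e ▸ hbw)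
    have hlt : ord v < ord b := by
      by_contra hc
      exact hbv (anc_sibling T ord h b v hb hpb
        (h.2.2 b b v w ⟨0, rfl⟩ hbw (by omega) hvw.le))
    have hau' := h.2.1 _ _ hau
    exact Or.inr ⟨a, b, ⟨u, hu, hnu, Or.inr ⟨hup, ha, hpa, hau⟩⟩,
      ⟨w, hw, hnw, Or.inr ⟨hwp, hb, hpb, hbw⟩⟩, by omega, hlt,
      fun hc => hbv (anc_sibling T ord h v b hv hpb.symm hc).symm⟩
  · rintro (⟨x, hA, hn, ⟨hx, _⟩ | ⟨_, ha, hpa, _⟩⟩ | ⟨a, b, ⟨u, hu, hnu, hu'⟩, ⟨w, hw, hnw, hw'⟩, hav, hvb, hnb⟩)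
    · exact Or.inl (hx ▸ hA)
    · exact absurd (anc_parent_root T ord h (T.parent v) ⟨0, hpa⟩) ha
    · rcases hu' with ⟨rfl, _⟩ | ⟨_, ha, hpa, hau⟩
      · exact Or.inl hu
      rcases hw' with ⟨rfl, _⟩ | ⟨_, hb, hpb, hbw⟩
      · exact Or.inl hw
      have hbw' := h.2.1 _ _ hbw
      refine Or.inr ⟨u, w, hu, hw, ?_, by omega, hnw⟩
      by_contra hc
      have := anc_sibling T ord h a v ha hpa
        (h.2.2 a a v u ⟨0, rfl⟩ hau hav.le (by omega))
      subst this
      omega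
end
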